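/- Let n ≥ 1 and let f be a Boolean function on n variables with L₃(f) > 0. Then (D(f))⁻¹ ≤ L₃(f) ≤ (1 + n·ln 2)·(D(f))⁻¹. -/

import Mathlib

/-!
The lower bound is averaging. If `φ₁ ∨ ⋯ ∨ φ_m` computes `f` with `s` clauses in total, then under
any distribution on `f⁻¹(1)` the acceptance probabilities of the `φᵢ` sum to at least `1`, so some
`φᵢ` accepts with probability at least `|φᵢ| / s`; hence `D_μ(f) ≥ 1 / s` (`inv_le_Dmu`).

The upper bound is greedy weighted set cover (`exists_cover`), and needs no minimax theorem. If `U`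
is the set of points of `f⁻¹(1)` not yet covered, the uniform distribution on `U` provides a
one-sided `φ` covering at least `D(f) · |φ| · |U|` points of `U`. Thus `D(f) · |φ|` is at most
`(|U| - |U'|) / |U| ≤ H(|U|) - H(|U'|)`, where `U'` is what remains uncovered and `H` is the
harmonic sum (`sub_div_le_harmonic_sub`). This telescopes to a total size of at most
`H(2 ^ n) / D(f) ≤ (1 + n ln 2) / D(f)`.

The hypothesis `L₃(f) > 0` says exactly that `f` is not constant: constant `0` is computed by the
empty list, and constant `1` by the empty CNF, both of size `0`.
-/

/-- A literal over `n` variables: a coordinate `x_i` (if `neg = false`)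
or its negation `¬ x_i` (if `neg = true`). -/
structure Lit (n : ℕ) where
  idx : Fin n
  neg : Bool
deriving DecidableEq

/-- Evaluation of a literal at an assignment. -/
def Lit.eval {n : ℕ} (l : Lit n) (x : Fin n → Bool) : Bool :=
  if l.neg then !(x l.idx) else x l.idx

/-- A clause: a finite set of literals, evaluated as their disjunction. -/
abbrev Clause (n : ℕ) := Finset (Lit n)

/-- A CNF formula: a finite set of clauses, evaluated as their conjunction.
Its size is its number of clauses (`Finset.card`). -/
abbrev CNF (n : ℕ) := Finset (Clause n)

/-- `φ.sat x` means the CNF formula `φ` evaluates to `1` at `x`. -/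
def CNF.sat {n : ℕ} (φ : CNF n) (x : Fin n → Bool) : Prop :=
  ∀ c ∈ φ, ∃ l ∈ c, l.eval x = true

instance {n : ℕ} (φ : CNF n) (x : Fin n → Bool) : Decidable (φ.sat x) :=
  inferInstanceAs (Decidable (∀ c ∈ φ, ∃ l ∈ c, Lit.eval l x = true))

/-- `φ⁻¹(1) ⊆ f⁻¹(1)`: the formula does not err on inputs where `f` is `0`. -/
def CNF.onesided {n : ℕ} (φ : CNF n) (f : (Fin n → Bool) → Bool) : Prop :=
  ∀ x, φ.sat x → f x = true

/-- A CNF formula is monotone if none of its literals is negated. -/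
def CNF.mono {n : ℕ} (φ : CNF n) : Prop :=
  ∀ c ∈ φ, ∀ l ∈ c, l.neg = false

/-- A distribution on `f⁻¹(1)`: nonnegative, supported on `f⁻¹(1)`, summing to 1. -/
def IsDistOn {n : ℕ} (μ : (Fin n → Bool) → ℝ) (f : (Fin n → Bool) → Bool) : Prop :=
  (∀ x, 0 ≤ μ x) ∧ (∀ x, f x = false → μ x = 0) ∧ (∑ x, μ x) = 1

/-- `Pr_{x ∼ μ}[φ(x) = 1]`. -/
noncomputable def CNF.pr {n : ℕ} (φ : CNF n) (μ : (Fin n → Bool) → ℝ) : ℝ :=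
  ∑ x, if φ.sat x then μ x else 0

/-- `D_μ(f)`: the maximum, over CNF formulas `φ` with `φ⁻¹(1) ⊆ f⁻¹(1)` and `|φ| ≥ 1`,
of `Pr_{x∼μ}[φ(x)=1] / |φ|` (0 if there is no such formula). -/
noncomputable def Dmu {n : ℕ} (f : (Fin n → Bool) → Bool) (μ : (Fin n → Bool) → ℝ) : ℝ :=
  sSup {r : ℝ | ∃ φ : CNF n, φ.onesided f ∧ 1 ≤ φ.card ∧ r = φ.pr μ / φ.card}

/-- `D(f)`: the minimum of `D_μ(f)` over distributions `μ` on `f⁻¹(1)`. -/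
noncomputable def Dof {n : ℕ} (f : (Fin n → Bool) → Bool) : ℝ :=
  sInf {r : ℝ | ∃ μ, IsDistOn μ f ∧ r = Dmu f μ}

/-- The monotone variant `D⁺_μ(f)`, restricted to monotone CNF formulas. -/
noncomputable def DmuPlus {n : ℕ} (f : (Fin n → Bool) → Bool) (μ : (Fin n → Bool) → ℝ) : ℝ :=
  sSup {r : ℝ | ∃ φ : CNF n, φ.mono ∧ φ.onesided f ∧ 1 ≤ φ.card ∧ r = φ.pr μ / φ.card}

/-- `D⁺(f)`: the minimum of `D⁺_μ(f)` over distributions `μ` on `f⁻¹(1)`. -/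
noncomputable def DPlus {n : ℕ} (f : (Fin n → Bool) → Bool) : ℝ :=
  sInf {r : ℝ | ∃ μ, IsDistOn μ f ∧ r = DmuPlus f μ}

/-- A list of CNF formulas computes `f` as their pointwise disjunction. -/
def ComputedByOr {n : ℕ} (L : List (CNF n)) (f : (Fin n → Bool) → Bool) : Prop :=
  ∀ x, f x = true ↔ ∃ φ ∈ L, φ.sat x

/-- `L₃(f)`: the minimum size (total number of clauses) of a depth-3 formula computing `f`. -/
noncomputable def L3 {n : ℕ} (f : (Fin n → Bool) → Bool) : ℕ :=
  sInf {s : ℕ | ∃ L : List (CNF n), ComputedByOr L f ∧ s = (L.map Finset.card).sum}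

/-- `L₃⁺(f)`: the minimum size of a depth-3 monotone formula computing `f`. -/
noncomputable def L3Plus {n : ℕ} (f : (Fin n → Bool) → Bool) : ℕ :=
  sInf {s : ℕ | ∃ L : List (CNF n), (∀ φ ∈ L, φ.mono) ∧ ComputedByOr L f ∧
    s = (L.map Finset.card).sum}

/-- The number of ones in a Boolean input. -/
def ones {n : ℕ} (x : Fin n → Bool) : ℕ := (Finset.univ.filter fun i => x i = true).card

/-- The parity function: `1` iff the number of ones is odd. -/
def parityF (n : ℕ) : (Fin n → Bool) → Bool := fun x => decide (ones x % 2 = 1)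

/-- The majority function: `1` iff the number of ones is at least `n/2`. -/
def majF (n : ℕ) : (Fin n → Bool) → Bool := fun x => decide (n ≤ 2 * ones x)

/-- `Pr_{x uniform in f⁻¹(1)}[φ(x) = 1]`. -/
noncomputable def prUnif {n : ℕ} (f : (Fin n → Bool) → Bool) (φ : CNF n) : ℝ :=
  ((Finset.univ.filter fun x => f x = true ∧ φ.sat x).card : ℝ) /
    ((Finset.univ.filter fun x => f x = true).card : ℝ)

/-- `x` is an isolated solution of `φ`: `φ(x)=1` and `φ(y)=0` for every `y`
differing from `x` in exactly one coordinate. -/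
def IsIsolated {n : ℕ} (φ : CNF n) (x : Fin n → Bool) : Prop :=
  φ.sat x ∧ ∀ y : Fin n → Bool, hammingDist x y = 1 → ¬ φ.sat y

instance (n : ℕ) : Finite (Lit n) :=
  Finite.of_injective (fun l : Lit n => (l.idx, l.neg)) (by
    rintro ⟨a, b⟩ ⟨c, d⟩ h
    simpa using h)

/-- The supremum defining `Dmu` ranges over finitely many values. -/
lemma finite_Dmu_set {n : ℕ} (f : (Fin n → Bool) → Bool) (μ : (Fin n → Bool) → ℝ) :
    {r : ℝ | ∃ φ : CNF n, φ.onesided f ∧ 1 ≤ φ.card ∧ r = φ.pr μ / φ.card}.Finite := by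
  refine (Set.finite_range fun φ : CNF n => φ.pr μ / φ.card).subset ?_
  rintro r ⟨φ, -, -, rfl⟩
  exact ⟨φ, rfl⟩

/-- The uniform distribution on a finite set of inputs. -/
noncomputable def unifOn {n : ℕ} (U : Finset (Fin n → Bool)) : (Fin n → Bool) → ℝ :=
  fun x => if x ∈ U then (U.card : ℝ)⁻¹ else 0

lemma isDistOn_unifOn {n : ℕ} {f : (Fin n → Bool) → Bool} {U : Finset (Fin n → Bool)}
    (hU : U.Nonempty) (hf : ∀ x ∈ U, f x = true) : IsDistOn (unifOn U) f := by
  have hc : (U.card : ℝ) ≠ 0 := by exact_mod_cast hU.card_pos.ne'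
  refine ⟨fun x => ?_, fun x hx => ?_, ?_⟩
  · unfold unifOn
    split_ifs <;> positivity
  · have : x ∉ U := fun h => by simp [hf x h] at hx
    simp [unifOn, this]
  · simp [unifOn, Finset.sum_ite_mem, hc]

lemma pr_unifOn {n : ℕ} (φ : CNF n) (U : Finset (Fin n → Bool)) :
    φ.pr (unifOn U) = ((U.filter fun x => φ.sat x).card : ℝ) / U.card := by
  have h : ∀ x, (if φ.sat x then unifOn U x else 0) =
      if x ∈ U.filter (fun x => φ.sat x) then (U.card : ℝ)⁻¹ else 0 := by
    intro x
    by_cases h1 : φ.sat x <;> by_cases h2 : x ∈ U <;> simp [unifOn, h1, h2]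
  unfold CNF.pr
  rw [Finset.sum_congr rfl fun x _ => h x, Finset.sum_ite_mem, Finset.univ_inter,
    Finset.sum_const, nsmul_eq_mul, div_eq_mul_inv]

lemma pr_nonneg {n : ℕ} (φ : CNF n) {μ : (Fin n → Bool) → ℝ} (hμ : ∀ x, 0 ≤ μ x) :
    0 ≤ φ.pr μ :=
  Finset.sum_nonneg fun x _ => by split_ifs <;> simp [hμ x]

/-- Union bound: a list of formulas covering the support of `μ` has acceptance probabilities
summing to at least `1`. -/
lemma one_le_sum_pr {n : ℕ} {f : (Fin n → Bool) → Bool} {μ : (Fin n → Bool) → ℝ}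
    (hμ : IsDistOn μ f) {L : List (CNF n)} (hL : ∀ x, f x = true → ∃ φ ∈ L, φ.sat x) :
    1 ≤ (L.map fun φ => φ.pr μ).sum := by
  have hswap : ∀ L : List (CNF n), (L.map fun φ => φ.pr μ).sum =
      ∑ x, (L.map fun φ => if φ.sat x then μ x else 0).sum := by
    intro L
    induction L with
    | nil => simp
    | cons φ L ih =>
      simp only [List.map_cons, List.sum_cons, ih, Finset.sum_add_distrib]
      rfl
  rw [hswap, ← hμ.2.2]
  refine Finset.sum_le_sum fun x _ => ?_
  have h0 : ∀ y ∈ L.map (fun φ => if φ.sat x then μ x else 0), 0 ≤ y := by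
    intro y hy
    obtain ⟨φ, -, rfl⟩ := List.mem_map.1 hy
    split_ifs <;> simp [hμ.1 x]
  cases hx : f x with
  | false => rw [hμ.2.1 x hx]; simp
  | true =>
    obtain ⟨φ, hφ, hs⟩ := hL x hx
    exact List.single_le_sum h0 _ (List.mem_map.2 ⟨φ, hφ, by simp [hs]⟩)

lemma inv_le_Dmu {n : ℕ} {f : (Fin n → Bool) → Bool} (hf0 : ∃ x, f x = false)
    {μ : (Fin n → Bool) → ℝ} (hμ : IsDistOn μ f) {L : List (CNF n)} (hL : ComputedByOr L f) :
    (((L.map Finset.card).sum : ℕ) : ℝ)⁻¹ ≤ Dmu f μ := by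
  have hle : ∀ φ ∈ L, φ.pr μ ≤ Dmu f μ * (φ.card : ℝ) := by
    intro φ hφ
    have hos : φ.onesided f := fun x hx => (hL x).2 ⟨φ, hφ, hx⟩
    have hc : 1 ≤ φ.card := by
      rw [Nat.one_le_iff_ne_zero, Ne, Finset.card_eq_zero]
      rintro rfl
      -- the empty CNF accepts everything, so it errs on a zero of `f`
      obtain ⟨x, hx⟩ := hf0
      have := hos x (by simp [CNF.sat])
      simp [hx] at this
    have hpos : (0 : ℝ) < φ.card := by exact_mod_cast hc
    rw [← div_le_iff₀ hpos]
    exact le_csSup (finite_Dmu_set f μ).bddAbove ⟨φ, hos, hc, rfl⟩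
  have h1 : 1 ≤ Dmu f μ * (((L.map Finset.card).sum : ℕ) : ℝ) := by
    refine (one_le_sum_pr hμ fun x hx => (hL x).1 hx).trans ?_
    refine (List.sum_le_sum hle).trans (le_of_eq ?_)
    rw [List.sum_map_mul_left, Nat.cast_list_sum, List.map_map]
    rfl
  have hs : (0 : ℝ) < (((L.map Finset.card).sum : ℕ) : ℝ) := by
    rcases (Nat.cast_nonneg (α := ℝ) (L.map Finset.card).sum).eq_or_lt with h | h
    · rw [← h] at h1; linarith
    · exact h
  rwa [inv_le_iff_one_le_mul₀ hs]

lemma sub_div_le_harmonic_sub {k m : ℕ} (h : k ≤ m) :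
    ((m : ℝ) - k) / m ≤ (harmonic m : ℝ) - harmonic k := by
  rcases Nat.eq_zero_or_pos m with rfl | hm
  · obtain rfl : k = 0 := by omega
    simp
  have hm' : (0 : ℝ) < m := by exact_mod_cast hm
  have key : ∀ d, k + d ≤ m → (d : ℝ) / m ≤ (harmonic (k + d) : ℝ) - harmonic k := by
    intro d
    induction d with
    | zero => simp
    | succ d ih =>
      intro hd
      have h1 := ih (by omega)
      have h2 : (1 : ℝ) / m ≤ ((k + d + 1 : ℕ) : ℝ)⁻¹ := by
        rw [one_div]
        apply inv_anti₀ (by positivity)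
        exact_mod_cast hd
      rw [← Nat.add_assoc, harmonic_succ]
      push_cast at h2 ⊢
      rw [add_div]
      linarith
  have := key (m - k) (by omega)
  rwa [Nat.add_sub_cancel' h, Nat.cast_sub h] at this

/-- Greedy set cover: if every distribution on `f⁻¹(1)` has a one-sided formula of ratio at least
`D`, then any `U ⊆ f⁻¹(1)` is covered by one-sided formulas of total size at most
`H(|U|) / D`. -/
lemma exists_cover {n : ℕ} {f : (Fin n → Bool) → Bool} {D : ℝ} (hD : 0 < D)
    (hgood : ∀ μ, IsDistOn μ f →
      ∃ φ : CNF n, φ.onesided f ∧ 1 ≤ φ.card ∧ D ≤ φ.pr μ / φ.card)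
    (U : Finset (Fin n → Bool)) (hU : ∀ x ∈ U, f x = true) :
    ∃ L : List (CNF n), (∀ φ ∈ L, φ.onesided f) ∧ (∀ x ∈ U, ∃ φ ∈ L, φ.sat x) ∧
      D * (((L.map Finset.card).sum : ℕ) : ℝ) ≤ harmonic U.card := by
  induction U using Finset.strongInduction with
  | H U ih =>
    rcases U.eq_empty_or_nonempty with rfl | hne
    · exact ⟨[], by simp, by simp, by simp⟩
    obtain ⟨φ, hos, hc, hr⟩ := hgood _ (isDistOn_unifOn hne hU)
    have hc' : (0 : ℝ) < φ.card := by exact_mod_cast hc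
    have hu : (0 : ℝ) < U.card := by exact_mod_cast hne.card_pos
    rw [le_div_iff₀ hc', pr_unifOn] at hr
    have hsplit := Finset.card_filter_add_card_filter_not (s := U) (fun x => φ.sat x)
    have hpos : 0 < (U.filter fun x => φ.sat x).card := by
      by_contra h
      have h0 : (U.filter fun x => φ.sat x).card = 0 := by omega
      rw [h0] at hr
      have := mul_pos hD hc'
      simp at hr
      linarith
    have hss : U.filter (fun x => ¬ φ.sat x) ⊂ U := by
      obtain ⟨y, hy⟩ := Finset.card_pos.1 hpos
      rw [Finset.mem_filter] at hy
      rw [Finset.filter_ssubset]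
      exact ⟨y, hy.1, fun h => h hy.2⟩
    obtain ⟨L, h1, h2, h3⟩ := ih _ hss fun x hx => hU x (Finset.mem_filter.1 hx).1
    refine ⟨φ :: L, ?_, ?_, ?_⟩
    · intro ψ hψ
      rcases List.mem_cons.1 hψ with rfl | hψ
      exacts [hos, h1 ψ hψ]
    · intro x hx
      by_cases hs : φ.sat x
      · exact ⟨φ, by simp, hs⟩
      · obtain ⟨ψ, hψ, hψs⟩ := h2 x (Finset.mem_filter.2 ⟨hx, hs⟩)
        exact ⟨ψ, List.mem_cons_of_mem _ hψ, hψs⟩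
    · have h4 := sub_div_le_harmonic_sub (Finset.card_le_card hss.1)
      have h5 : ((U.filter fun x => φ.sat x).card : ℝ) =
          (U.card : ℝ) - ((U.filter fun x => ¬ φ.sat x).card : ℝ) := by
        rw [← hsplit]
        push_cast
        ring
      rw [h5] at hr
      rw [List.map_cons, List.sum_cons, Nat.cast_add, mul_add]
      linarith

/-- Duality theorem. For `n ≥ 1` and `f` with `L₃(f) > 0`,
`(D(f))⁻¹ ≤ L₃(f) ≤ (1 + n·ln 2)·(D(f))⁻¹`. -/
theorem stmt0 (n : ℕ) (hn : 1 ≤ n) (f : (Fin n → Bool) → Bool) (hL : 0 < L3 f) :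
    (Dof f)⁻¹ ≤ (L3 f : ℝ) ∧ (L3 f : ℝ) ≤ (1 + (n : ℝ) * Real.log 2) * (Dof f)⁻¹ := by
  have hle : ∀ L : List (CNF n), ComputedByOr L f → L3 f ≤ (L.map Finset.card).sum :=
    fun L h => Nat.sInf_le ⟨L, h, rfl⟩
  have hf0 : ∃ x, f x = false := by
    by_contra! h
    have := hle [∅] (fun x => by simp [CNF.sat, h x])
    simp at this
    omega
  have hf1 : ∃ x, f x = true := by
    by_contra! h
    have := hle [] (fun x => by simp [h x])
    simp at this
    omega
  obtain ⟨L, hLc, hLs⟩ : L3 f ∈ {s : ℕ | ∃ L : List (CNF n), ComputedByOr L f ∧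
      s = (L.map Finset.card).sum} := Nat.sInf_mem (Nat.nonempty_of_pos_sInf hL)
  have hDmu : ∀ μ, IsDistOn μ f → ((L3 f : ℕ) : ℝ)⁻¹ ≤ Dmu f μ := by
    intro μ hμ
    rw [hLs]
    exact inv_le_Dmu hf0 hμ hLc
  have hLpos : (0 : ℝ) < (L3 f : ℝ) := by exact_mod_cast hL
  have hD : ((L3 f : ℕ) : ℝ)⁻¹ ≤ Dof f := by
    obtain ⟨x, hx⟩ := hf1
    refine le_csInf ⟨_, unifOn {x}, isDistOn_unifOn (by simp) (by simpa using hx), rfl⟩ ?_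
    rintro r ⟨μ, hμ, rfl⟩
    exact hDmu μ hμ
  have hDpos : 0 < Dof f := (inv_pos.2 hLpos).trans_le hD
  refine ⟨inv_le_of_inv_le₀ hLpos hD, ?_⟩
  have hgood : ∀ μ, IsDistOn μ f →
      ∃ φ : CNF n, φ.onesided f ∧ 1 ≤ φ.card ∧ Dof f ≤ φ.pr μ / φ.card := by
    intro μ hμ
    have hDle : Dof f ≤ Dmu f μ := by
      refine csInf_le ⟨((L3 f : ℕ) : ℝ)⁻¹, ?_⟩ ⟨μ, hμ, rfl⟩
      rintro r ⟨ν, hν, rfl⟩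
      exact hDmu ν hν
    have hne : {r : ℝ | ∃ φ : CNF n, φ.onesided f ∧ 1 ≤ φ.card ∧
        r = φ.pr μ / φ.card}.Nonempty := by
      -- the supremum over the empty set would be `0`, but `Dmu f μ` is positive
      by_contra h
      rw [Set.not_nonempty_iff_eq_empty] at h
      have h0 : Dmu f μ = 0 := by rw [Dmu, h, Real.sSup_empty]
      linarith
    obtain ⟨φ, h1, h2, h3⟩ := hne.csSup_mem (finite_Dmu_set f μ)
    exact ⟨φ, h1, h2, hDle.trans_eq h3⟩
  obtain ⟨M, hM1, hM2, hM3⟩ := exists_cover hDpos hgood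
    (Finset.univ.filter fun x => f x = true) (by simp)
  have hMc : ComputedByOr M f :=
    fun x => ⟨fun hx => hM2 x (by simpa using hx), fun ⟨φ, hφ, hs⟩ => hM1 φ hφ x hs⟩
  have hcard : (Finset.univ.filter fun x : Fin n → Bool => f x = true).card ≤ 2 ^ n := by
    refine (Finset.card_le_univ _).trans ?_
    simp
  have hcard0 : 0 < (Finset.univ.filter fun x : Fin n → Bool => f x = true).card := by
    obtain ⟨x, hx⟩ := hf1
    exact Finset.card_pos.2 ⟨x, by simpa using hx⟩
  have hH : (harmonic (Finset.univ.filter fun x : Fin n → Bool => f x = true).card : ℝ) ≤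
      1 + (n : ℝ) * Real.log 2 := by
    refine (harmonic_le_one_add_log _).trans ?_
    rw [← Real.log_pow]
    gcongr
    exact_mod_cast hcard
  have hfin : (L3 f : ℝ) ≤ (((M.map Finset.card).sum : ℕ) : ℝ) := by exact_mod_cast hle M hMc
  rw [← div_eq_mul_inv, le_div_iff₀ hDpos, mul_comm]
  exact (mul_le_mul_of_nonneg_left hfin hDpos.le).trans (hM3.trans hH)
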